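/- arXiv:2110.07018 — 2 statements merged into one kernel-verified Lean document; each statement's English description precedes it below -/
import Mathlib

section
/- In every non-idempotent Kleene algebra, the unrolling identity holds: for every element p, (p·p)*·(1 + p) = p*. -/
/-!
Both inequalities are inductions. For `(p * p)⋆ * (1 + p) ≤ p⋆`, the element `p⋆` is a prefixed
point of `x ↦ (1 + p) + p * p * x`, by unfolding it twice. For `p⋆ ≤ (p * p)⋆ * (1 + p)`, the
right-hand side is a prefixed point of `x ↦ 1 + x * p`; this uses the right-handed unfolding
`1 + q⋆ * q ≤ q⋆` (`NKA.one_add_star_mul_le`), which follows from the left-handed axiom.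
Idempotence of addition is never needed.
-/

/-- A non-idempotent Kleene algebra (NKA): a (not necessarily additively
idempotent) semiring equipped with a partial order preserved by `+` and `*`,
and a star operation satisfying `1 + p * p⋆ ≤ p⋆` and the two induction laws. -/
class NKA (K : Type*) extends Semiring K, PartialOrder K where
  star : K → K
  add_le_add' : ∀ {p q r s : K}, p ≤ q → r ≤ s → p + r ≤ q + s
  mul_le_mul' : ∀ {p q r s : K}, p ≤ q → r ≤ s → p * r ≤ q * s
  one_add_mul_star_le : ∀ p : K, 1 + p * star p ≤ star p
  star_ind_left : ∀ {p q r : K}, q + p * r ≤ r → star p * q ≤ r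
  star_ind_right : ∀ {p q r : K}, q + r * p ≤ r → q * star p ≤ r

postfix:max "⋆" => NKA.star

/-- The mirror image of the unfolding axiom. By left induction `q⋆ * q ≤ q * q⋆`, since
`q + q * (q * q⋆) = q * (1 + q * q⋆) ≤ q * q⋆`. -/
theorem NKA.one_add_star_mul_le {K : Type*} [NKA K] (q : K) : 1 + q⋆ * q ≤ q⋆ := by
  have h : q⋆ * q ≤ q * q⋆ := by
    apply NKA.star_ind_left
    calc q + q * (q * q⋆) = q * (1 + q * q⋆) := by rw [mul_add, mul_one]
      _ ≤ q * q⋆ := NKA.mul_le_mul' le_rfl (NKA.one_add_mul_star_le q)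
  exact (NKA.add_le_add' le_rfl h).trans (NKA.one_add_mul_star_le q)

/-- Unrolling identity in any non-idempotent Kleene algebra. -/
theorem nka_unrolling {K : Type*} [NKA K] (p : K) :
    (p * p)⋆ * (1 + p) = p⋆ := by
  apply le_antisymm
  · -- Left induction for `p * p`, unfolding `p⋆` twice.
    apply NKA.star_ind_left
    calc 1 + p + p * p * p⋆ = 1 + p * (1 + p * p⋆) := by
          rw [mul_add, mul_one, add_assoc, mul_assoc]
      _ ≤ 1 + p * p⋆ :=
          NKA.add_le_add' le_rfl (NKA.mul_le_mul' le_rfl (NKA.one_add_mul_star_le p))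
      _ ≤ p⋆ := NKA.one_add_mul_star_le p
  · -- Right induction for `p`, using the right unfolding of `(p * p)⋆`.
    rw [← one_mul p⋆]
    apply NKA.star_ind_right
    calc 1 + (p * p)⋆ * (1 + p) * p
          = (1 + (p * p)⋆ * (p * p)) + (p * p)⋆ * p := by
          rw [mul_assoc, add_mul, one_mul, mul_add, add_assoc, add_comm ((p * p)⋆ * p)]
      _ ≤ (p * p)⋆ + (p * p)⋆ * p :=
          NKA.add_le_add' (NKA.one_add_star_mul_le (p * p)) le_rfl
      _ = (p * p)⋆ * (1 + p) := by rw [mul_add, mul_one]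
end

section
/- The branching rule (R.IF) of propositional quantum Hoare logic is derivable: in every non-idempotent Kleene algebra with an effect subalgebra L with top element e, for every finite partition (m_i)_{i∈I}, every family (a_i)_{i∈I} of elements of L, every b ∈ L, and every family (p_i)_{i∈I} of elements of K, if p_i·¬b ≤ ¬a_i for all i ∈ I, then (∑_{i∈I} m_i·p_i)·¬b ≤ ¬(∑_{i∈I} m_i·a_i). -/
postfix:max "⋆" => NKA.star

/-- An effect subalgebra of an NKA `K`: a subset `carrier` with top element
`e ∈ carrier`, containing `0`, bounded above by `e`, closed under sums that
stay below `e`, and equipped with a negation: for every `a ∈ carrier`,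
`neg a` is the unique element of `carrier` with `a + neg a = e`. -/
structure EffectSubalgebra (K : Type*) [NKA K] where
  carrier : Set K
  e : K
  e_mem : e ∈ carrier
  zero_mem : (0 : K) ∈ carrier
  le_e : ∀ a ∈ carrier, a ≤ e
  add_mem : ∀ {a b : K}, a ∈ carrier → b ∈ carrier → a + b ≤ e → a + b ∈ carrier
  neg : K → K
  neg_mem : ∀ {a : K}, a ∈ carrier → neg a ∈ carrier
  add_neg : ∀ {a : K}, a ∈ carrier → a + neg a = e
  neg_unique : ∀ {a b : K}, a ∈ carrier → b ∈ carrier → a + b = e → b = neg a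

/-- The order of an NKA is compatible with addition, so Mathlib's lemmas on ordered sums apply. -/
theorem NKA.isOrderedAddMonoid (K : Type*) [NKA K] : IsOrderedAddMonoid K where
  add_le_add_left _ _ hab c := NKA.add_le_add' hab (le_refl c)

/-- Star induction for `0 + 1 * x ≤ x` gives `1⋆ * 0 ≤ x`. -/
theorem NKA.zero_le' {K : Type*} [NKA K] (x : K) : 0 ≤ x := by
  have h : NKA.star (1 : K) * 0 ≤ x := NKA.star_ind_left (by simp)
  simpa using h

theorem EffectSubalgebra.sum_mem {K : Type*} [NKA K] (L : EffectSubalgebra K) {I : Type*}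
    (s : Finset I) (f : I → K) (hf : ∀ i, f i ∈ L.carrier) (hs : ∑ i ∈ s, f i ≤ L.e) :
    ∑ i ∈ s, f i ∈ L.carrier := by
  classical
  induction s using Finset.induction_on with
  | empty => simpa using L.zero_mem
  | insert i s hi ih =>
    rw [Finset.sum_insert hi] at hs ⊢
    refine L.add_mem (hf i) (ih (le_trans ?_ hs)) hs
    simpa using NKA.add_le_add' (NKA.zero_le' (f i)) (le_refl (∑ j ∈ s, f j))

/-- The branching rule (R.IF) of propositional quantum Hoare logic is derivable
in NKAT: if `{a i} p i {b}` holds for each branch `i` of a partition `(m i)`,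
then `{∑ i, m i * a i} ∑ i, m i * p i {b}` holds. -/
theorem nkat_rule_if {K : Type*} [NKA K] (L : EffectSubalgebra K)
    {I : Type*} [Fintype I] (m : I → K)
    (hm : ∀ i, ∀ a ∈ L.carrier, m i * a ∈ L.carrier)
    (hpart : ∑ i, m i * L.e = L.e)
    (a : I → K) (ha : ∀ i, a i ∈ L.carrier)
    (b : K) (hb : b ∈ L.carrier)
    (p : I → K) (h : ∀ i, p i * L.neg b ≤ L.neg (a i)) :
    (∑ i, m i * p i) * L.neg b ≤ L.neg (∑ i, m i * a i) := by
  haveI := NKA.isOrderedAddMonoid K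
  have sum_mem : ∀ c : I → K, (∀ i, c i ∈ L.carrier) → ∑ i, m i * c i ∈ L.carrier := by
    intro c hc
    refine L.sum_mem _ _ (fun i => hm i _ (hc i)) ?_
    rw [← hpart]
    exact Finset.sum_le_sum fun i _ => NKA.mul_le_mul' le_rfl (L.le_e _ (hc i))
  have hneg : ∑ i, m i * L.neg (a i) = L.neg (∑ i, m i * a i) := by
    refine L.neg_unique (sum_mem a ha) (sum_mem _ fun i => L.neg_mem (ha i)) ?_
    rw [← Finset.sum_add_distrib, ← hpart]
    exact Finset.sum_congr rfl fun i _ => by rw [← mul_add, L.add_neg (ha i)]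
  rw [← hneg, Finset.sum_mul]
  refine Finset.sum_le_sum fun i _ => ?_
  rw [mul_assoc]
  exact NKA.mul_le_mul' le_rfl (h i)
end
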